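/- arXiv:2008.00270 — 4 statements merged into one kernel-verified Lean document; each statement's English description precedes it below -/
import Mathlib

section
/- In a tree, any three vertices have a unique median: for all vertices u, v, w of G there exists exactly one vertex m that lies on the path from u to v, on the path from u to w, and on the path from v to w. -/
/-- `m` lies on the path from `a` to `b` in the graph `G`. -/
def onPath {V : Type*} (G : SimpleGraph V) (a m b : V) : Prop :=
  G.dist a m + G.dist m b = G.dist a b

/-- `m` is a median of the vertices `u`, `v`, `w`: it lies on the path from `u` to `v`,
on the path from `u` to `w`, and on the path from `v` to `w`. -/
def isMedian {V : Type*} (G : SimpleGraph V) (m u v w : V) : Prop :=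
  onPath G u m v ∧ onPath G u m w ∧ onPath G v m w

/-- `u` is an ancestor of `v` with respect to the root `r`:
`u` lies on the path from `r` to `v`. -/
def isAncestor {V : Type*} (G : SimpleGraph V) (r u v : V) : Prop :=
  onPath G r u v

/-- `l` is a lowest common ancestor of `u` and `v` with respect to the root `r`. -/
def isLCA {V : Type*} (G : SimpleGraph V) (r l u v : V) : Prop :=
  isAncestor G r l u ∧ isAncestor G r l v ∧
    ∀ a : V, isAncestor G r a u → isAncestor G r a v → isAncestor G r a l

/-!
A vertex set `S` inducing a subtree has, for every vertex `w`, a gate: the vertex of `S` nearest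
to `w` lies on the path to `w` from each vertex of `S`, because its path to `w` meets `S` only at
its start. When `S` is the path from `u` to `v`, the gate of `w` is a median. It is the only one,
since every median `m` lies in `S` and the distances between `u`, `v`, `w` determine `dist m w`.
-/

section Median

variable {V : Type*} {G : SimpleGraph V}

/-- `m` is the gate of `w` in the vertex set `S`, in the sense of gated sets in metric graph theory:
it belongs to `S`, and every vertex of `S` has it on a shortest path to `w`. -/
def IsGate (G : SimpleGraph V) (S : Set V) (m w : V) : Prop :=
  m ∈ S ∧ ∀ x ∈ S, onPath G x m w

lemma isMedian.two_mul_dist_add_dist {m u v w : V} (h : isMedian G m u v w) :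
    2 * G.dist m w + G.dist u v = G.dist u w + G.dist v w := by
  obtain ⟨huv, huw, hvw⟩ := h
  rw [onPath] at huv huw hvw
  rw [G.dist_comm (u := m) (v := v)] at huv
  omega

lemma IsGate.eq_of_dist_eq (hG : G.Connected) {S : Set V} {m m' w : V} (h : IsGate G S m w)
    (hm' : m' ∈ S) (hdist : G.dist m' w = G.dist m w) : m' = m := by
  have hon : G.dist m' m + G.dist m w = G.dist m' w := h.2 m' hm'
  exact hG.dist_eq_zero_iff.mp (by omega)

lemma isPath_append_of_forall_mem_support_eq {a m b : V} {p : G.Walk a m} {q : G.Walk m b}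
    (hp : p.IsPath) (hq : q.IsPath) (h : ∀ x ∈ p.support, x ∈ q.support → x = m) :
    (p.append q).IsPath := by
  have hm : m ∉ q.support.tail := by
    have hnodup := hq.support_nodup
    rw [← q.cons_tail_support, List.nodup_cons] at hnodup
    exact hnodup.1
  rw [SimpleGraph.Walk.isPath_def, SimpleGraph.Walk.support_append, List.nodup_append']
  refine ⟨hp.support_nodup, hq.support_nodup.tail, fun x hxp hxq ↦ hm ?_⟩
  exact h x hxp (List.mem_of_mem_tail hxq) ▸ hxq

lemma length_eq_dist_of_isAcyclic (hG : G.IsAcyclic) {a b : V} {p : G.Walk a b} (hp : p.IsPath) :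
    p.length = G.dist a b := by
  obtain ⟨q, hq, hlength⟩ := p.reachable.exists_path_of_dist
  have hpq : p = q := congrArg Subtype.val ((hG.subsingleton_path a b).elim ⟨p, hp⟩ ⟨q, hq⟩)
  rw [hpq, hlength]

lemma onPath_of_isPath_append (hG : G.IsAcyclic) {a m b : V} {p : G.Walk a m} {q : G.Walk m b}
    (h : (p.append q).IsPath) : onPath G a m b := by
  rw [onPath, ← length_eq_dist_of_isAcyclic hG h,
    ← length_eq_dist_of_isAcyclic hG h.of_append_left,
    ← length_eq_dist_of_isAcyclic hG h.of_append_right, SimpleGraph.Walk.length_append]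

lemma onPath_of_mem_support (hG : G.IsAcyclic) {a m b : V} {p : G.Walk a b} (hp : p.IsPath)
    (hm : m ∈ p.support) : onPath G a m b := by
  obtain ⟨q, r, -, -, rfl⟩ := hp.mem_support_iff_exists_append.mp hm
  exact onPath_of_isPath_append hG hp

lemma onPath_iff_mem_support (hG : G.IsTree) {a m b : V} {p : G.Walk a b} (hp : p.IsPath) :
    onPath G a m b ↔ m ∈ p.support := by
  refine ⟨fun h ↦ ?_, onPath_of_mem_support hG.isAcyclic hp⟩
  obtain ⟨q, hq⟩ := hG.connected.exists_walk_length_eq_dist a m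
  obtain ⟨r, hr⟩ := hG.connected.exists_walk_length_eq_dist m b
  have hqr : (q.append r).IsPath := by
    apply SimpleGraph.Walk.isPath_of_length_eq_dist
    rw [SimpleGraph.Walk.length_append, hq, hr, h]
  rw [(hG.existsUnique_path a b).unique hp hqr]
  exact (SimpleGraph.Walk.mem_support_append_iff q r).mpr (.inl q.end_mem_support)

lemma exists_isPath_support_subset_of_connected_induce {S : Set V} (hS : (G.induce S).Connected)
    {a b : V} (ha : a ∈ S) (hb : b ∈ S) :
    ∃ p : G.Walk a b, p.IsPath ∧ ∀ x ∈ p.support, x ∈ S := by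
  obtain ⟨p, hp⟩ := hS.exists_isPath ⟨a, ha⟩ ⟨b, hb⟩
  have hsupport : ∀ x ∈ (p.map (SimpleGraph.Embedding.induce S).toHom).support, x ∈ S := by
    intro x hx
    rw [SimpleGraph.Walk.support_map, List.mem_map] at hx
    obtain ⟨y, -, rfl⟩ := hx
    exact y.2
  exact ⟨p.map (SimpleGraph.Embedding.induce S).toHom, hp.map Subtype.val_injective, hsupport⟩

lemma exists_isGate_of_connected_induce (hG : G.IsTree) {S : Set V}
    (hS : (G.induce S).Connected) (w : V) : ∃ m, IsGate G S m w := by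
  obtain ⟨s⟩ := hS.nonempty
  obtain ⟨m, hmS, hmin⟩ :=
    exists_minimalFor_of_wellFoundedLT (· ∈ S) (fun x ↦ G.dist x w) ⟨s, s.2⟩
  obtain ⟨r, hr⟩ := hG.connected.exists_isPath m w
  have hmeet : ∀ x ∈ S, x ∈ r.support → x = m := by
    intro x hxS hxr
    have hon : G.dist m x + G.dist x w = G.dist m w := onPath_of_mem_support hG.isAcyclic hr hxr
    have hle : G.dist m w ≤ G.dist x w := hmin hxS (le_add_self.trans_eq hon)
    exact (hG.connected.dist_eq_zero_iff.mp (by omega)).symm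
  refine ⟨m, hmS, fun x hxS ↦ ?_⟩
  obtain ⟨q, hq, hqS⟩ := exists_isPath_support_subset_of_connected_induce hS hxS hmS
  exact onPath_of_isPath_append hG.isAcyclic
    (isPath_append_of_forall_mem_support_eq hq hr fun y hyq ↦ hmeet y (hqS y hyq))

theorem tree_median_existsUnique_general (hG : G.IsTree) (u v w : V) :
    ∃! m : V, isMedian G m u v w := by
  obtain ⟨p, hp⟩ := hG.connected.exists_isPath u v
  obtain ⟨m, hm⟩ := exists_isGate_of_connected_induce hG p.connected_induce_support w
  have hmedian : isMedian G m u v w :=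
    ⟨(onPath_iff_mem_support hG hp).mpr hm.1, hm.2 u p.start_mem_support,
      hm.2 v p.end_mem_support⟩
  refine ⟨m, hmedian, fun m' hm' ↦ ?_⟩
  have hdist : G.dist m' w = G.dist m w := by
    have := hmedian.two_mul_dist_add_dist
    have := hm'.two_mul_dist_add_dist
    omega
  exact hm.eq_of_dist_eq hG.connected ((onPath_iff_mem_support hG hp).mp hm'.1) hdist

end Median

/-- In a tree, any three vertices have a unique median. -/
theorem tree_median_existsUnique {V : Type*} [Fintype V] (G : SimpleGraph V)
    (hG : G.IsTree) (u v w : V) :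
    ∃! m : V, isMedian G m u v w :=
  tree_median_existsUnique_general hG u v w
end

section
/- Case 1 of the meeting-point analysis: in a rooted tree, if q is an ancestor of u and q is an ancestor of v, then the median of u, v, q equals the lowest common ancestor of u and v. -/
/-!
On a geodesic from `r` to `u` through `q`, every vertex between `q` and `u` is also an ancestor of
`u`. So the median `m` is a common ancestor of `u` and `v`, and the lowest common ancestor `l` is a
descendant of `m`. Then `l` lies between `m` and each of `u` and `v`, so a walk from `u` to `v`
through `m` passes `l` twice; as `m` lies on the path from `u` to `v`, the detour from `l` to `m`
and back has length zero.
-/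

section

variable {V : Type*} {G : SimpleGraph V} {a b c d : V}

theorem onPath.symm (h : onPath G a b c) : onPath G c b a := by
  unfold onPath at h ⊢
  rw [G.dist_comm (u := c) (v := b), G.dist_comm (u := b) (v := a), G.dist_comm (u := c) (v := a),
    add_comm, h]

theorem onPath.trans_right (hG : G.Connected) (habd : onPath G a b d) (hbcd : onPath G b c d) :
    onPath G a c d := by
  unfold onPath at habd hbcd ⊢
  have hac : G.dist a c ≤ G.dist a b + G.dist b c := hG.dist_triangle
  have had : G.dist a d ≤ G.dist a c + G.dist c d := hG.dist_triangle
  omega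

theorem onPath.trans_left_right (hG : G.Connected) (hacd : onPath G a c d)
    (habc : onPath G a b c) : onPath G b c d := by
  unfold onPath at hacd habc ⊢
  have had : G.dist a d ≤ G.dist a b + G.dist b d := hG.dist_triangle
  have hbd : G.dist b d ≤ G.dist b c + G.dist c d := hG.dist_triangle
  omega

theorem onPath.eq_of_onPath_of_onPath {u v m l : V} (hG : G.Connected) (humv : onPath G u m v)
    (hmlu : onPath G m l u) (hmlv : onPath G m l v) : m = l := by
  have hulm : G.dist u l + G.dist l m = G.dist u m := hmlu.symm
  have huv : G.dist u v ≤ G.dist u l + G.dist l v := hG.dist_triangle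
  have hml : G.dist m l = 0 := by
    unfold onPath at humv hmlv
    omega
  exact hG.dist_eq_zero_iff.mp hml

theorem median_case1_general {r u v q m l : V} (hG : G.Connected)
    (hqu : isAncestor G r q u) (hqv : isAncestor G r q v)
    (hm : isMedian G m u v q) (hl : isLCA G r l u v) : m = l := by
  obtain ⟨humv, humq, hvmq⟩ := hm
  obtain ⟨hlu, hlv, hlowest⟩ := hl
  have hmu : isAncestor G r m u := onPath.trans_right hG hqu humq.symm
  have hmv : isAncestor G r m v := onPath.trans_right hG hqv hvmq.symm
  have hml : isAncestor G r m l := hlowest m hmu hmv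
  have hmlu : onPath G m l u := onPath.trans_left_right hG hlu hml
  have hmlv : onPath G m l v := onPath.trans_left_right hG hlv hml
  exact humv.eq_of_onPath_of_onPath hG hmlu hmlv

end

/-- Case 1: if `q` is an ancestor of both `u` and `v`, then the median of
`u`, `v`, `q` equals the LCA of `u` and `v`. -/
theorem median_case1 {V : Type*} [Fintype V] (G : SimpleGraph V)
    (hG : G.IsTree) (r u v q : V)
    (hqu : isAncestor G r q u) (hqv : isAncestor G r q v) :
    ∀ m l : V, isMedian G m u v q → isLCA G r l u v → m = l :=
  fun _ _ ↦ median_case1_general hG.connected hqu hqv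
end

section
/- Meeting-time characterization for two walkers moving toward a common target in a tree: let u, v, q be vertices with dist(v,q) ≤ dist(u,q), let t be the median of u, v, q, and set s* = dist(v,t). Then s* ≤ dist(v,q), s* ≤ dist(u,q), the walker position v_{s*} equals t and t lies on the path from u_{s*} to q; and for every s < s*, the vertex v_s does not lie on the path from u_s to q. -/
/-!
A shortest walk from `a` to `b` visits exactly one vertex at each distance `s ≤ dist a b` from `a`.
Where the shortest walk is unique, as in a tree, the vertices between `a` and `b` are therefore
ordered linearly by their distance from `a`. The walkers from `v` and `u` reach `t` after
`dist v t ≤ dist u t` steps, so when the first arrives at `t`, the second has not yet passed it.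

That they cannot meet earlier only needs the triangle inequality: if `v_s`, with `s < dist v t`, lay
between `u_s` and `q`, it would lie between `u` and `q` and be farther from `q` than `t` is. It
would then be closer than `t` to both `u` and `v`, contradicting that `t` lies between `u` and `v`.
-/

section

variable {V : Type*} {G : SimpleGraph V} {a b m n q t u v y : V}

theorem dist_getVert_getVert_le (p : G.Walk a b) (i j : ℕ) :
    G.dist (p.getVert i) (p.getVert (i + j)) ≤ j := by
  calc G.dist (p.getVert i) (p.getVert (i + j))
      = G.dist (p.getVert i) ((p.drop i).getVert j) := by rw [p.drop_getVert]
    _ ≤ ((p.drop i).take j).length := SimpleGraph.dist_le _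
    _ ≤ j := by rw [SimpleGraph.Walk.take_length]; exact min_le_left _ _

namespace onPath

theorem dist_le_dist (h : onPath G a m b) : G.dist a m ≤ G.dist a b :=
  Nat.le.intro h

theorem dist_lt_dist_iff (hm : onPath G a m b) (hn : onPath G a n b) :
    G.dist a m < G.dist a n ↔ G.dist n b < G.dist m b := by
  unfold onPath at hm hn
  lia

theorem trans_right_s10 (hc : G.Connected) (hm : onPath G a m b) (hn : onPath G m n b) :
    onPath G a n b := by
  unfold onPath at *
  have to_n : G.dist a n ≤ G.dist a m + G.dist m n := hc.dist_triangle
  have to_b : G.dist a b ≤ G.dist a n + G.dist n b := hc.dist_triangle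
  lia

theorem exists_walk_getVert_dist_eq (hc : G.Connected) (h : onPath G a m b) :
    ∃ p : G.Walk a b, p.length = G.dist a b ∧ p.getVert (G.dist a m) = m := by
  obtain ⟨p, hp⟩ := hc.exists_walk_length_eq_dist a m
  obtain ⟨r, hr⟩ := hc.exists_walk_length_eq_dist m b
  refine ⟨p.append r, ?_, ?_⟩
  · rw [SimpleGraph.Walk.length_append, hp, hr, h]
  · simp [SimpleGraph.Walk.getVert_append, hp]

end onPath

/-- A graph is geodetic (in the sense of Ore) if a shortest walk is determined by its endpoints.
This is the setting in which the position of a walker on its way to a target is well defined.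
Connectedness is not part of the definition. -/
def IsGeodetic (G : SimpleGraph V) : Prop :=
  ∀ ⦃a b : V⦄ (p r : G.Walk a b), p.length = G.dist a b → r.length = G.dist a b → p = r

theorem isGeodetic_of_isAcyclic (hG : G.IsAcyclic) : IsGeodetic G := fun _ _ p r hp hr ↦
  congrArg Subtype.val <|
    (hG.subsingleton_path _ _).elim ⟨p, p.isPath_of_length_eq_dist hp⟩
      ⟨r, r.isPath_of_length_eq_dist hr⟩

namespace IsGeodetic

theorem exists_walk_forall_getVert_dist_eq (hG : IsGeodetic G) (hc : G.Connected) (a b : V) :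
    ∃ p : G.Walk a b, ∀ m, onPath G a m b → p.getVert (G.dist a m) = m := by
  obtain ⟨p, hp⟩ := hc.exists_walk_length_eq_dist a b
  refine ⟨p, fun m hm ↦ ?_⟩
  obtain ⟨r, hr, hrm⟩ := hm.exists_walk_getVert_dist_eq hc
  rwa [hG p r hp hr]

theorem eq_of_dist_eq (hG : IsGeodetic G) (hc : G.Connected) (hm : onPath G a m b)
    (hn : onPath G a n b) (h : G.dist a m = G.dist a n) : m = n := by
  obtain ⟨p, hp⟩ := hG.exists_walk_forall_getVert_dist_eq hc a b
  rw [← hp m hm, h, hp n hn]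

theorem onPath_of_dist_le (hG : IsGeodetic G) (hc : G.Connected) (hm : onPath G a m b)
    (hn : onPath G a n b) (h : G.dist a m ≤ G.dist a n) : onPath G m n b := by
  have dist_le : G.dist m n ≤ G.dist a n - G.dist a m := by
    obtain ⟨p, hp⟩ := hG.exists_walk_forall_getVert_dist_eq hc a b
    simpa only [Nat.add_sub_cancel' h, hp m hm, hp n hn] using
      dist_getVert_getVert_le p (G.dist a m) (G.dist a n - G.dist a m)
  have le_dist : G.dist m b ≤ G.dist m n + G.dist n b := hc.dist_triangle
  unfold onPath at *
  lia

end IsGeodetic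

namespace isMedian

theorem dist_le_dist_iff (ht : isMedian G t u v q) :
    G.dist v t ≤ G.dist u t ↔ G.dist v q ≤ G.dist u q := by
  rw [← ht.2.1, ← ht.2.2, Nat.add_le_add_iff_right]

theorem not_onPath_of_dist_lt (hc : G.Connected) (ht : isMedian G t u v q)
    (hy : onPath G v y q) (h : G.dist v y < G.dist v t) : ¬ onPath G u y q := by
  obtain ⟨huv, huq, hvq⟩ := ht
  intro hy'
  have lt_u : G.dist u y < G.dist u t :=
    (hy'.dist_lt_dist_iff huq).mpr ((hy.dist_lt_dist_iff hvq).mp h)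
  refine (hc.dist_triangle (u := u) (v := y) (w := v)).not_gt ?_
  calc G.dist u y + G.dist y v = G.dist u y + G.dist v y := by rw [G.dist_comm (u := y)]
    _ < G.dist u t + G.dist v t := Nat.add_lt_add lt_u h
    _ = G.dist u t + G.dist t v := by rw [G.dist_comm (u := v)]
    _ = G.dist u v := huv

end isMedian

end

theorem meeting_time_characterization_general {V : Type*} (G : SimpleGraph V)
    (hc : G.Connected) (hG : IsGeodetic G) (u v q t : V)
    (hd : G.dist v q ≤ G.dist u q)
    (ht : isMedian G t u v q) :
    G.dist v t ≤ G.dist v q ∧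
    G.dist v t ≤ G.dist u q ∧
    (onPath G v t q ∧ ∀ y : V, onPath G v y q → G.dist v y = G.dist v t → y = t) ∧
    (∀ x : V, onPath G u x q → G.dist u x = G.dist v t → onPath G x t q) ∧
    (∀ s : ℕ, s < G.dist v t →
      ∀ x y : V, onPath G u x q → G.dist u x = s →
        onPath G v y q → G.dist v y = s → ¬ onPath G x y q) := by
  have le_dist_u : G.dist v t ≤ G.dist u t := ht.dist_le_dist_iff.mpr hd
  have ⟨_, huq, hvq⟩ := ht
  refine ⟨hvq.dist_le_dist, le_dist_u.trans huq.dist_le_dist,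
    ⟨hvq, fun y hy hyt ↦ hG.eq_of_dist_eq hc hy hvq hyt⟩,
    fun x hx hxt ↦ hG.onPath_of_dist_le hc hx huq (hxt.trans_le le_dist_u), ?_⟩
  rintro s hs x y hx - hy rfl hxy
  exact ht.not_onPath_of_dist_lt hc hy hs (hx.trans_right_s10 hc hxy)

/-- Meeting-time characterization for two walkers moving toward a common target
`q` in a tree.  For a vertex `a` and `s ≤ dist(a,q)`, the position `a_s` after
walking `s` steps from `a` toward `q` is the unique vertex `x` with
`onPath G a x q` and `dist a x = s`.  With `t` the median of `u`, `v`, `q` and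
`s* = dist(v,t)`: `s* ≤ dist(v,q)`, `s* ≤ dist(u,q)`, the walker position
`v_{s*}` equals `t`, `t` lies on the path from `u_{s*}` to `q`, and for every
`s < s*` the vertex `v_s` does not lie on the path from `u_s` to `q`. -/
theorem meeting_time_characterization {V : Type*} [Fintype V] (G : SimpleGraph V)
    (hG : G.IsTree) (u v q t : V)
    (hd : G.dist v q ≤ G.dist u q)
    (ht : isMedian G t u v q) :
    G.dist v t ≤ G.dist v q ∧
    G.dist v t ≤ G.dist u q ∧
    (onPath G v t q ∧ ∀ y : V, onPath G v y q → G.dist v y = G.dist v t → y = t) ∧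
    (∀ x : V, onPath G u x q → G.dist u x = G.dist v t → onPath G x t q) ∧
    (∀ s : ℕ, s < G.dist v t →
      ∀ x y : V, onPath G u x q → G.dist u x = s →
        onPath G v y q → G.dist v y = s → ¬ onPath G x y q) :=
  meeting_time_characterization_general G hG.connected (isGeodetic_of_isAcyclic hG.isAcyclic)
    u v q t hd ht
end

section
/- In the Chrobak–Larmore process, server 1 (a server whose initial position is closest to the request q) never becomes inactive: server 1 is active at every time s < dist(v_1,q), and its position after dist(v_1,q) phases is q; hence the process serves the request after exactly dist(v_1,q) phases. -/
/-- Server `i` is active at time `s` in the Chrobak–Larmore process: there is no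
`j ≠ i` such that `p j s` lies on the path from `p i s` to the request `q` and
(`p j s ≠ p i s`, or `p j s = p i s` and `j < i`). -/
def clActive {V : Type*} (G : SimpleGraph V) (q : V) {k : ℕ}
    (p : Fin k → ℕ → V) (i : Fin k) (s : ℕ) : Prop :=
  ¬ ∃ j : Fin k, j ≠ i ∧ onPath G (p i s) (p j s) q ∧
      (p j s ≠ p i s ∨ (p j s = p i s ∧ j < i))

/-- The Chrobak–Larmore process: `p i 0 = v i`; in each phase every active
server moves one step along the unique path from its current position toward
`q`, and every inactive server stays in place. -/
def clProcess {V : Type*} (G : SimpleGraph V) (q : V) {k : ℕ}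
    (v : Fin k → V) (p : Fin k → ℕ → V) : Prop :=
  (∀ i : Fin k, p i 0 = v i) ∧
  ∀ (i : Fin k) (s : ℕ),
    (clActive G q p i s →
      onPath G (p i s) (p i (s + 1)) q ∧
      G.dist (p i (s + 1)) q = G.dist (p i s) q - 1) ∧
    (¬ clActive G q p i s → p i (s + 1) = p i s)

/-!
Each phase brings a server at most one step closer to `q`, so after `s` phases no server is closer
to `q` than the nearest server would be after `s` consecutive moves. If the nearest server has moved
in every phase so far, a server lying on its path to `q` can therefore only sit at its own position,
and such a coincidence is decided in favour of the lower index. Hence it moves again.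
-/

section FirstServer

variable {V : Type*} {G : SimpleGraph V} {q : V} {k : ℕ} {v : Fin k → V} {p : Fin k → ℕ → V}
  {i : Fin k} {s : ℕ}

theorem onPath.eq_of_dist_le {a m b : V} (hG : G.Connected) (hm : onPath G a m b)
    (hle : G.dist a b ≤ G.dist m b) : m = a := by
  have hzero : G.dist a m = 0 := by
    unfold onPath at hm
    omega
  exact (hG.dist_eq_zero_iff.mp hzero).symm

theorem clActive_of_forall_dist_le (hG : G.Connected)
    (hmin : ∀ j, G.dist (p i s) q ≤ G.dist (p j s) q) (hne : ∀ j < i, p j s ≠ p i s) :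
    clActive G q p i s := by
  rintro ⟨j, -, hpath, hdiff | ⟨heq, hlt⟩⟩
  · exact hdiff (hpath.eq_of_dist_le hG (hmin j))
  · exact hne j hlt heq

namespace clProcess

theorem dist_succ_of_clActive (hp : clProcess G q v p) (hact : clActive G q p i s) :
    G.dist (p i (s + 1)) q = G.dist (p i s) q - 1 :=
  ((hp.2 i s).1 hact).2

theorem dist_le_dist_succ_add_one (hp : clProcess G q v p) (i : Fin k) (s : ℕ) :
    G.dist (p i s) q ≤ G.dist (p i (s + 1)) q + 1 := by
  by_cases hact : clActive G q p i s
  · have hmove := hp.dist_succ_of_clActive hact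
    omega
  · rw [(hp.2 i s).2 hact]
    exact Nat.le_succ _

theorem dist_le_dist_add (hp : clProcess G q v p) (i : Fin k) (s : ℕ) :
    G.dist (v i) q ≤ G.dist (p i s) q + s := by
  induction s with
  | zero => rw [hp.1 i, Nat.add_zero]
  | succ s ih =>
    have hstep := hp.dist_le_dist_succ_add_one i s
    omega

theorem clActive_of_dist_add_eq (hp : clProcess G q v p) (hG : G.Connected)
    (hmin : ∀ j, G.dist (v i) q ≤ G.dist (v j) q)
    (hlt : ∀ j < i, G.dist (v i) q < G.dist (v j) q)
    (hs : G.dist (p i s) q + s = G.dist (v i) q) : clActive G q p i s := by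
  refine clActive_of_forall_dist_le hG (fun j => ?_) (fun j hji heq => ?_)
  · have hj := (hmin j).trans (hp.dist_le_dist_add j s)
    omega
  · have hj := (hlt j hji).trans_le (hp.dist_le_dist_add j s)
    rw [heq] at hj
    omega

theorem dist_add_eq (hp : clProcess G q v p) (hG : G.Connected)
    (hmin : ∀ j, G.dist (v i) q ≤ G.dist (v j) q)
    (hlt : ∀ j < i, G.dist (v i) q < G.dist (v j) q) (hs : s ≤ G.dist (v i) q) :
    G.dist (p i s) q + s = G.dist (v i) q := by
  induction s with
  | zero => rw [hp.1 i, Nat.add_zero]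
  | succ s ih =>
    have hdist := ih (Nat.le_of_succ_le hs)
    have hmove := hp.dist_succ_of_clActive (hp.clActive_of_dist_add_eq hG hmin hlt hdist)
    omega

end clProcess

theorem chrobakLarmore_first_server_serves_general (hG : G.Connected) (hp : clProcess G q v p)
    (hmin : ∀ j, G.dist (v i) q ≤ G.dist (v j) q)
    (hlt : ∀ j < i, G.dist (v i) q < G.dist (v j) q) :
    (∀ s ≤ G.dist (v i) q, clActive G q p i s) ∧ p i (G.dist (v i) q) = q := by
  refine ⟨fun s hs => hp.clActive_of_dist_add_eq hG hmin hlt (hp.dist_add_eq hG hmin hlt hs),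
    hG.dist_eq_zero_iff.mp ?_⟩
  have harrive := hp.dist_add_eq hG hmin hlt le_rfl
  omega

end FirstServer

/-- In the Chrobak–Larmore process, server 1 (index `0` here, whose initial
position is closest to the request `q`) never becomes inactive: it is active at
every time `s < dist(v 1, q)` and its position after `dist(v 1, q)` phases is
`q`. -/
theorem chrobakLarmore_first_server_serves {V : Type*} [Fintype V]
    (G : SimpleGraph V) (hG : G.IsTree)
    (k : ℕ) (hk : 2 ≤ k) (q : V) (v : Fin k → V)
    (hinj : Function.Injective v)
    (hord : ∀ i j : Fin k, i ≤ j → G.dist (v i) q ≤ G.dist (v j) q)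
    (p : Fin k → ℕ → V) (hp : clProcess G q v p) :
    (∀ s : ℕ, s < G.dist (v ⟨0, by omega⟩) q → clActive G q p ⟨0, by omega⟩ s) ∧
    p ⟨0, by omega⟩ (G.dist (v ⟨0, by omega⟩) q) = q := by
  have hserve := chrobakLarmore_first_server_serves_general hG.connected hp
    (fun j => hord ⟨0, by omega⟩ j (Nat.zero_le _)) (fun _ hj => absurd hj (Nat.not_lt_zero _))
  exact ⟨fun s hs => hserve.1 s hs.le, hserve.2⟩
end
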